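/- Let A ∈ ℝ^{m×n} with k + 1 ≤ min(m,n) be partitioned in blocks A = [[A11, A12],[A21, A22]] with A11 ∈ ℝ^{k×k} invertible, and let A_k = [[A11, A12],[A21, A21·A11⁻¹·A12]] be the rank-k approximant of the partial LU factorization. Suppose that for some μ ≥ 1 and ν ≥ 1: (1) (1/μ)·σ_j(A) ≤ σ_j(A_k) ≤ μ·σ_j(A) for 1 ≤ j ≤ k and σ_{k+j}(A) ≤ σ_j(A − A_k) ≤ μ·σ_{k+j}(A) for 1 ≤ j ≤ min(m,n) − k; and (2) ‖A21A11⁻¹‖_max ≤ ν and ‖A11⁻¹A12‖_max ≤ ν. Then for every k×k submatrix Â11 of A that differs from A11 in at most one row and at most one column, vol(Â11) ≤ (ν² + μ²·(1 + √(k(m−k))·ν)·(1 + √(k(n−k))·ν))·vol(A11). -/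

import Mathlib

open Matrix

/-- The spectral norm (`‖·‖₂`, largest singular value) of a real matrix. -/
noncomputable def specNorm {m n : Type*} [Fintype m] [Fintype n] [DecidableEq n]
    (A : Matrix m n ℝ) : ℝ :=
  ‖LinearMap.toContinuousLinearMap (Matrix.toEuclideanLin A)‖

/-- `sval A j` is the `j`-th largest singular value of `A` (1-indexed), characterized as the
distance, in the spectral norm, from `A` to the set of matrices of rank `< j`. -/
noncomputable def sval {m n : Type*} [Fintype m] [Fintype n] [DecidableEq n]
    (A : Matrix m n ℝ) (j : ℕ) : ℝ :=
  sInf {x : ℝ | ∃ B : Matrix m n ℝ, B.rank < j ∧ x = specNorm (A - B)}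

/-- The volume of a matrix: the product of its singular values. -/
noncomputable def vol {m n : Type*} [Fintype m] [Fintype n] [DecidableEq n]
    (A : Matrix m n ℝ) : ℝ :=
  ∏ j ∈ Finset.Icc 1 (min (Fintype.card m) (Fintype.card n)), sval A j

/-- `DiffOne b r` : `r` is an injective selection of indices whose image (index set)
differs from the index set selected by `b` in at most one element. -/
def DiffOne {ι α : Type*} [Fintype ι] [DecidableEq α] (b r : ι → α) : Prop :=
  Function.Injective r ∧ (Finset.univ.image r \ Finset.univ.image b).card ≤ 1

/-!
Write `A = L * A₁₁ * R + E` with `L = [1; A₂₁A₁₁⁻¹]`, `R = [1, A₁₁⁻¹A₁₂]` and `E = A - A_k`.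
Exchanging row `a` of `A₁₁` for row `p` of `A` and column `b` for column `q` multiplies its
determinant by `L p a * R b q + E p q * A₁₁⁻¹ b a`. The first product is at most `ν²`. For the
second, `|E p q| ≤ σ₁(E) ≤ μ σ_{k+1}(A) ≤ μ σ_k(A) ≤ μ² σ_k(A_k)`, while `A_k = L * A₁₁ * R` gives
`σ_k(A_k) ≤ ‖L‖ σ_k(A₁₁) ‖R‖` and `σ_k(A₁₁) |A₁₁⁻¹ b a| ≤ 1`.

The Eckart–Young theorem, through which `sval` is matched with the singular values of the
associated linear map, also turns the volume of a square matrix into its absolute determinant.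
-/

section EckartYoung

open Module

variable {𝕜 E F : Type*} [RCLike 𝕜] [NormedAddCommGroup E] [InnerProductSpace 𝕜 E]
  [FiniteDimensional 𝕜 E] [NormedAddCommGroup F] [InnerProductSpace 𝕜 F] [FiniteDimensional 𝕜 F]

/-- An orthonormal basis of right singular vectors of `T`: the `l`-th vector (0-indexed) belongs to
the singular value `T.singularValues l`, so the basis is sorted by decreasing singular value. -/
noncomputable def rightSingularBasis (T : E →ₗ[𝕜] F) :
    OrthonormalBasis (Fin (finrank 𝕜 E)) 𝕜 E :=
  T.isSymmetric_adjoint_comp_self.eigenvectorBasis rfl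

lemma norm_sq_apply_eq_sum_singularValues (T : E →ₗ[𝕜] F) (x : E) :
    ‖T x‖ ^ 2 = ∑ l : Fin (finrank 𝕜 E),
      T.singularValues l ^ 2 * ‖inner 𝕜 (rightSingularBasis T l) x‖ ^ 2 := by
  have inner_adjoint_comp_self : ∀ l : Fin (finrank 𝕜 E),
      inner 𝕜 (rightSingularBasis T l) ((T.adjoint ∘ₗ T) x) =
        (T.singularValues l ^ 2 : ℝ) * inner 𝕜 (rightSingularBasis T l) x := fun l ↦ by
    rw [← T.isSymmetric_adjoint_comp_self, rightSingularBasis,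
      LinearMap.IsSymmetric.apply_eigenvectorBasis, inner_smul_left, RCLike.conj_ofReal,
      T.sq_singularValues_fin rfl]
  calc ‖T x‖ ^ 2 = RCLike.re (inner 𝕜 x ((T.adjoint ∘ₗ T) x)) := by
        rw [LinearMap.comp_apply, LinearMap.adjoint_inner_right, inner_self_eq_norm_sq]
    _ = ∑ l : Fin (finrank 𝕜 E),
          T.singularValues l ^ 2 * ‖inner 𝕜 (rightSingularBasis T l) x‖ ^ 2 := by
        rw [← (rightSingularBasis T).sum_inner_mul_inner, map_sum]
        refine Finset.sum_congr rfl fun l _ ↦ ?_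
        rw [inner_adjoint_comp_self, mul_left_comm, RCLike.re_ofReal_mul, inner_mul_symm_re_eq_norm,
          norm_mul, norm_inner_symm, sq ‖_‖]

lemma norm_apply_le_singularValues_mul_norm (T : E →ₗ[𝕜] F) {i : ℕ} {x : E}
    (hx : ∀ l : Fin (finrank 𝕜 E), l < i → inner 𝕜 (rightSingularBasis T l) x = 0) :
    ‖T x‖ ≤ T.singularValues i * ‖x‖ := by
  refine le_of_sq_le_sq ?_ (mul_nonneg (T.singularValues_nonneg i) (norm_nonneg x))
  rw [norm_sq_apply_eq_sum_singularValues, mul_pow,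
    ← (rightSingularBasis T).sum_sq_norm_inner_right x, Finset.mul_sum]
  refine Finset.sum_le_sum fun l _ ↦ ?_
  rcases lt_or_ge (l : ℕ) i with hl | hl
  · simp [hx l hl]
  · gcongr
    exacts [T.singularValues_nonneg l, T.singularValues_antitone hl]

lemma singularValues_mul_norm_le_norm_apply (T : E →ₗ[𝕜] F) {i : ℕ} {x : E}
    (hx : ∀ l : Fin (finrank 𝕜 E), i < l → inner 𝕜 (rightSingularBasis T l) x = 0) :
    T.singularValues i * ‖x‖ ≤ ‖T x‖ := by
  refine le_of_sq_le_sq ?_ (norm_nonneg _)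
  rw [norm_sq_apply_eq_sum_singularValues, mul_pow,
    ← (rightSingularBasis T).sum_sq_norm_inner_right x, Finset.mul_sum]
  refine Finset.sum_le_sum fun l _ ↦ ?_
  rcases lt_or_ge i (l : ℕ) with hl | hl
  · simp [hx l hl]
  · gcongr
    exacts [T.singularValues_nonneg i, T.singularValues_antitone hl]

lemma singularValues_le_norm_sub (T S : E →ₗ[𝕜] F) {i : ℕ}
    (hS : finrank 𝕜 (LinearMap.range S) ≤ i) :
    T.singularValues i ≤ ‖LinearMap.toContinuousLinearMap (T - S)‖ := by
  rcases le_or_gt (finrank 𝕜 E) i with hi | hi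
  · rw [T.singularValues_of_finrank_le hi]
    exact norm_nonneg _
  let tail : Finset (Fin (finrank 𝕜 E)) := Finset.Ioi ⟨i, hi⟩
  let f : E →ₗ[𝕜] LinearMap.range S × (tail → 𝕜) :=
    S.rangeRestrict.prod (LinearMap.pi fun l ↦ innerₛₗ 𝕜 (rightSingularBasis T l))
  have hf : finrank 𝕜 (LinearMap.range S × (tail → 𝕜)) < finrank 𝕜 E := by
    rw [finrank_prod, finrank_fintype_fun_eq_card, Fintype.card_coe, Fin.card_Ioi]
    grind
  obtain ⟨x, hfx, hx0⟩ := Submodule.exists_mem_ne_zero_of_ne_bot (f.ker_ne_bot_of_finrank_lt hf)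
  obtain ⟨hSx, htail⟩ := Prod.ext_iff.1 (LinearMap.mem_ker.1 hfx)
  have hSx : S x = 0 := congrArg Subtype.val hSx
  have htail : ∀ l : Fin (finrank 𝕜 E), i < l → inner 𝕜 (rightSingularBasis T l) x = 0 :=
    fun l hl ↦ congrFun htail ⟨l, Finset.mem_Ioi.2 hl⟩
  refine le_of_mul_le_mul_right ?_ (norm_pos_iff.2 hx0)
  calc T.singularValues i * ‖x‖ ≤ ‖T x‖ := singularValues_mul_norm_le_norm_apply T htail
    _ = ‖LinearMap.toContinuousLinearMap (T - S) x‖ := by simp [hSx]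
    _ ≤ ‖LinearMap.toContinuousLinearMap (T - S)‖ * ‖x‖ := ContinuousLinearMap.le_opNorm _ x

lemma exists_finrank_range_le_norm_sub_le_singularValues (T : E →ₗ[𝕜] F) (i : ℕ) :
    ∃ S : E →ₗ[𝕜] F, finrank 𝕜 (LinearMap.range S) ≤ i ∧
      ‖LinearMap.toContinuousLinearMap (T - S)‖ ≤ T.singularValues i := by
  classical
  let head : Finset (Fin (finrank 𝕜 E)) := {l | (l : ℕ) < i}
  let W := Submodule.span 𝕜 (head.image (rightSingularBasis T) : Set E)
  have finrank_W : finrank 𝕜 W ≤ i :=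
    calc finrank 𝕜 W ≤ (head.image (rightSingularBasis T)).card := finrank_span_finset_le_card _
      _ ≤ head.card := Finset.card_image_le
      _ ≤ i := by simp [head, Fin.card_filter_val_lt]
  refine ⟨T ∘ₗ W.starProjection, ?_,
    ContinuousLinearMap.opNorm_le_bound _ (T.singularValues_nonneg i) fun x ↦ ?_⟩
  · rw [LinearMap.range_comp, Submodule.range_starProjection]
    exact (Submodule.finrank_map_le T W).trans finrank_W
  have inner_residual : ∀ l : Fin (finrank 𝕜 E), (l : ℕ) < i →
      inner 𝕜 (rightSingularBasis T l) (x - W.starProjection x) = 0 := fun l hl ↦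
    W.sub_starProjection_mem_orthogonal x _ <| Submodule.subset_span <|
      Finset.mem_image_of_mem _ (by simpa [head] using hl)
  have norm_residual : ‖x - W.starProjection x‖ ≤ ‖x‖ := by
    rw [← Submodule.starProjection_orthogonal_val]
    exact Wᗮ.norm_starProjection_apply_le x
  calc ‖T x - T (W.starProjection x)‖ = ‖T (x - W.starProjection x)‖ := by rw [map_sub]
    _ ≤ T.singularValues i * ‖x - W.starProjection x‖ :=
        norm_apply_le_singularValues_mul_norm T inner_residual
    _ ≤ T.singularValues i * ‖x‖ :=
        mul_le_mul_of_nonneg_left norm_residual (T.singularValues_nonneg i)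

end EckartYoung

section SpecNorm

variable {l m n : Type*} [Fintype l] [Fintype m] [Fintype n] [DecidableEq n]

lemma specNorm_nonneg (A : Matrix m n ℝ) : 0 ≤ specNorm A :=
  norm_nonneg _

lemma norm_toEuclideanLin_apply_le (A : Matrix m n ℝ) (x : EuclideanSpace ℝ n) :
    ‖Matrix.toEuclideanLin A x‖ ≤ specNorm A * ‖x‖ :=
  (LinearMap.toContinuousLinearMap (Matrix.toEuclideanLin A)).le_opNorm x

lemma specNorm_le_of_norm_sq_le (A : Matrix m n ℝ) {c : ℝ} (hc : 0 ≤ c)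
    (h : ∀ x, ‖Matrix.toEuclideanLin A x‖ ^ 2 ≤ (c * ‖x‖) ^ 2) : specNorm A ≤ c :=
  ContinuousLinearMap.opNorm_le_bound _ hc fun x ↦ le_of_sq_le_sq (h x) (by positivity)

open scoped Matrix.Norms.L2Operator in
lemma specNorm_mul_le [DecidableEq m] (A : Matrix l m ℝ) (B : Matrix m n ℝ) :
    specNorm (A * B) ≤ specNorm A * specNorm B :=
  Matrix.l2_opNorm_mul A B

open scoped Matrix.Norms.L2Operator in
lemma specNorm_transpose [DecidableEq m] (A : Matrix m n ℝ) : specNorm Aᵀ = specNorm A :=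
  Matrix.conjTranspose_eq_transpose_of_trivial A ▸ Matrix.l2_opNorm_conjTranspose A

lemma specNorm_one_le : specNorm (1 : Matrix n n ℝ) ≤ 1 :=
  specNorm_le_of_norm_sq_le _ zero_le_one fun x ↦ by simp

lemma specNorm_le_sqrt_card_mul (A : Matrix m n ℝ) {ν : ℝ} (hν : 0 ≤ ν)
    (hA : ∀ i j, |A i j| ≤ ν) :
    specNorm A ≤ √(Fintype.card m * Fintype.card n) * ν := by
  refine specNorm_le_of_norm_sq_le A (by positivity) fun x ↦ ?_
  have row_sq_le : ∀ i, (∑ j, A i j * x j) ^ 2 ≤ Fintype.card n * ν ^ 2 * ‖x‖ ^ 2 := fun i ↦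
    calc (∑ j, A i j * x j) ^ 2 ≤ (∑ j, A i j ^ 2) * ∑ j, x j ^ 2 :=
          Finset.sum_mul_sq_le_sq_mul_sq _ _ _
      _ ≤ (∑ _j : n, ν ^ 2) * ∑ j, x j ^ 2 := by
          gcongr ?_ * _
          exact Finset.sum_le_sum fun j _ ↦ sq_le_sq.2 ((hA i j).trans (le_abs_self ν))
      _ = Fintype.card n * ν ^ 2 * ‖x‖ ^ 2 := by simp [EuclideanSpace.real_norm_sq_eq]
  calc ‖Matrix.toEuclideanLin A x‖ ^ 2 = ∑ i, (∑ j, A i j * x j) ^ 2 := by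
        rw [EuclideanSpace.real_norm_sq_eq]
        rfl
    _ ≤ ∑ _i : m, Fintype.card n * ν ^ 2 * ‖x‖ ^ 2 := Finset.sum_le_sum fun i _ ↦ row_sq_le i
    _ = (√(Fintype.card m * Fintype.card n) * ν * ‖x‖) ^ 2 := by
        rw [mul_pow, mul_pow, Real.sq_sqrt (by positivity), Finset.sum_const, Finset.card_univ,
          nsmul_eq_mul]
        ring

lemma specNorm_fromRows_le (A : Matrix l n ℝ) (B : Matrix m n ℝ) :
    specNorm (Matrix.fromRows A B) ≤ specNorm A + specNorm B := by
  have hA := specNorm_nonneg A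
  have hB := specNorm_nonneg B
  refine specNorm_le_of_norm_sq_le _ (by positivity) fun x ↦ ?_
  calc ‖Matrix.toEuclideanLin (Matrix.fromRows A B) x‖ ^ 2
      = ‖Matrix.toEuclideanLin A x‖ ^ 2 + ‖Matrix.toEuclideanLin B x‖ ^ 2 := by
        simp [EuclideanSpace.real_norm_sq_eq, Matrix.fromRows_mulVec]
    _ ≤ (specNorm A * ‖x‖) ^ 2 + (specNorm B * ‖x‖) ^ 2 := by
        gcongr <;> exact norm_toEuclideanLin_apply_le _ x
    _ ≤ ((specNorm A + specNorm B) * ‖x‖) ^ 2 := by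
        rw [add_mul]
        exact pow_add_pow_le (by positivity) (by positivity) two_ne_zero

lemma specNorm_fromRows_one_le (X : Matrix m n ℝ) {ν : ℝ} (hν : 0 ≤ ν)
    (hX : ∀ i j, |X i j| ≤ ν) :
    specNorm (Matrix.fromRows (1 : Matrix n n ℝ) X) ≤
      1 + √(Fintype.card n * Fintype.card m) * ν := by
  rw [mul_comm (Fintype.card n : ℝ)]
  exact (specNorm_fromRows_le 1 X).trans
    (add_le_add specNorm_one_le (specNorm_le_sqrt_card_mul X hν hX))

lemma specNorm_fromCols_one_le [DecidableEq m] (Y : Matrix m n ℝ) {ν : ℝ} (hν : 0 ≤ ν)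
    (hY : ∀ i j, |Y i j| ≤ ν) :
    specNorm (Matrix.fromCols (1 : Matrix m m ℝ) Y) ≤
      1 + √(Fintype.card m * Fintype.card n) * ν := by
  rw [← specNorm_transpose, Matrix.transpose_fromCols, Matrix.transpose_one]
  exact specNorm_fromRows_one_le Yᵀ hν fun i j ↦ hY j i

end SpecNorm

section SingularValues

lemma finrank_range_toEuclideanLin {m n : Type*} [Finite m] [Fintype n] [DecidableEq n]
    (A : Matrix m n ℝ) :
    Module.finrank ℝ (LinearMap.range (Matrix.toEuclideanLin A)) = A.rank := by
  have := Fintype.ofFinite m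
  rw [Matrix.toEuclideanLin_eq_toLin_orthonormal]
  exact (A.rank_eq_finrank_range_toLin _ _).symm

variable {l m n p : Type*} [Fintype l] [Fintype m] [Fintype n] [Fintype p] [DecidableEq n]

lemma sval_le (A B : Matrix m n ℝ) {j : ℕ} (hB : B.rank < j) : sval A j ≤ specNorm (A - B) :=
  csInf_le ⟨0, by rintro _ ⟨C, -, rfl⟩; exact specNorm_nonneg _⟩ ⟨B, hB, rfl⟩

lemma exists_rank_le_specNorm_sub_le (A : Matrix m n ℝ) (i : ℕ) :
    ∃ B : Matrix m n ℝ, B.rank ≤ i ∧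
      specNorm (A - B) ≤ (Matrix.toEuclideanLin A).singularValues i := by
  obtain ⟨S, hS, hle⟩ :=
    exists_finrank_range_le_norm_sub_le_singularValues (Matrix.toEuclideanLin A) i
  refine ⟨Matrix.toEuclideanLin.symm S, ?_, ?_⟩
  · rwa [← finrank_range_toEuclideanLin, LinearEquiv.apply_symm_apply]
  · rwa [specNorm, map_sub, LinearEquiv.apply_symm_apply]

theorem sval_add_one_eq_singularValues (A : Matrix m n ℝ) (i : ℕ) :
    sval A (i + 1) = (Matrix.toEuclideanLin A).singularValues i := by
  obtain ⟨B, hB, hAB⟩ := exists_rank_le_specNorm_sub_le A i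
  refine le_antisymm ((sval_le A B (by lia)).trans hAB) (le_csInf ⟨_, B, by lia, rfl⟩ ?_)
  rintro _ ⟨C, hC, rfl⟩
  rw [specNorm, map_sub]
  refine singularValues_le_norm_sub _ _ ?_
  rw [finrank_range_toEuclideanLin]
  lia

lemma sval_mul_mul_le [DecidableEq m] [DecidableEq p] (L : Matrix l m ℝ) (M : Matrix m p ℝ)
    (R : Matrix p n ℝ) (i : ℕ) :
    sval (L * M * R) (i + 1) ≤ specNorm L * sval M (i + 1) * specNorm R := by
  obtain ⟨B, hB, hMB⟩ := exists_rank_le_specNorm_sub_le M i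
  rw [← sval_add_one_eq_singularValues] at hMB
  have hrank : (L * B * R).rank < i + 1 := by
    grind [Matrix.rank_mul_le_left (L * B) R, Matrix.rank_mul_le_right L B]
  have hL := specNorm_nonneg L
  have hR := specNorm_nonneg R
  calc sval (L * M * R) (i + 1) ≤ specNorm (L * M * R - L * B * R) := sval_le _ _ hrank
    _ = specNorm (L * (M - B) * R) := by rw [Matrix.mul_sub, Matrix.sub_mul]
    _ ≤ specNorm L * specNorm (M - B) * specNorm R :=
        (specNorm_mul_le _ _).trans (by gcongr; exact specNorm_mul_le _ _)
    _ ≤ specNorm L * sval M (i + 1) * specNorm R := by gcongr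

lemma abs_apply_le_sval_one (A : Matrix m n ℝ) (i : m) (j : n) : |A i j| ≤ sval A 1 := by
  let e : EuclideanSpace ℝ n := EuclideanSpace.single j 1
  calc |A i j| = ‖Matrix.toEuclideanLin A e i‖ := by simp [e]
    _ ≤ ‖Matrix.toEuclideanLin A e‖ := PiLp.norm_apply_le _ i
    _ ≤ (Matrix.toEuclideanLin A).singularValues 0 * ‖e‖ :=
        norm_apply_le_singularValues_mul_norm _ fun _ hl ↦ absurd hl (Nat.not_lt_zero _)
    _ = sval A 1 := by simp [e, ← sval_add_one_eq_singularValues]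

lemma abs_apply_le_sq_mul_sval {A B : Matrix m n ℝ} {μ : ℝ} {k : ℕ} (hk : 0 < k) (hμ : 0 < μ)
    (hB : 1 / μ * sval A k ≤ sval B k) (hAB : sval (A - B) 1 ≤ μ * sval A (k + 1)) (p : m) (q : n) :
    |(A - B) p q| ≤ μ ^ 2 * sval B k := by
  obtain ⟨i, rfl⟩ := Nat.exists_eq_add_one.2 hk
  calc |(A - B) p q| ≤ sval (A - B) 1 := abs_apply_le_sval_one _ p q
    _ ≤ μ * sval A (i + 1 + 1) := hAB
    _ ≤ μ * sval A (i + 1) := by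
        rw [sval_add_one_eq_singularValues, sval_add_one_eq_singularValues]
        exact mul_le_mul_of_nonneg_left (LinearMap.singularValues_antitone _ i.le_succ) hμ.le
    _ ≤ μ * (μ * sval B (i + 1)) := by
        gcongr
        rwa [one_div, inv_mul_le_iff₀ hμ] at hB
    _ = μ ^ 2 * sval B (i + 1) := by ring

lemma sval_card_mul_abs_inv_apply_le_one {M : Matrix n n ℝ} (hM : IsUnit M.det) (a b : n) :
    sval M (Fintype.card n) * |M⁻¹ b a| ≤ 1 := by
  let x : EuclideanSpace ℝ n := WithLp.toLp 2 (M⁻¹.col a)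
  have hMx : Matrix.toEuclideanLin M x = EuclideanSpace.single a 1 := by
    rw [Matrix.toLpLin_toLp, ← Matrix.mulVec_single_one, Matrix.toLin'_apply, Matrix.mulVec_mulVec,
      Matrix.mul_nonsing_inv _ hM, Matrix.one_mulVec]
    rfl
  obtain ⟨i, hi⟩ := Nat.exists_eq_add_one.2 (Fintype.card_pos_iff.2 ⟨a⟩)
  have hi_last : ∀ l : Fin (Module.finrank ℝ (EuclideanSpace ℝ n)), ¬ i < l := fun l ↦ by
    have := l.2
    grind [finrank_euclideanSpace]
  rw [hi, sval_add_one_eq_singularValues]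
  calc (Matrix.toEuclideanLin M).singularValues i * |M⁻¹ b a|
      ≤ (Matrix.toEuclideanLin M).singularValues i * ‖x‖ :=
        mul_le_mul_of_nonneg_left (PiLp.norm_apply_le x b) (LinearMap.singularValues_nonneg _ i)
    _ ≤ ‖Matrix.toEuclideanLin M x‖ :=
        singularValues_mul_norm_le_norm_apply _ fun l hl ↦ absurd hl (hi_last l)
    _ = 1 := by simp [hMx]

theorem vol_eq_abs_det (M : Matrix n n ℝ) : vol M = |M.det| := by
  calc vol M = ∏ i ∈ Finset.range (Fintype.card n), sval M (i + 1) := by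
        rw [vol, min_self, Finset.range_eq_Ico, Finset.prod_Ico_add' (sval M), zero_add,
          Finset.Ico_add_one_right_eq_Icc]
    _ = (Matrix.toEuclideanLin M).normDet := by
        simp_rw [LinearMap.normDet_eq_prod_singularValues, finrank_euclideanSpace,
          sval_add_one_eq_singularValues]
    _ = |M.det| := by
        rw [LinearMap.normDet_eq_abs_det, Matrix.toEuclideanLin_eq_toLin_orthonormal,
          LinearMap.det_toLin]

end SingularValues

section Determinant

variable {ι m n K : Type*} [Fintype ι] [DecidableEq ι] [CommRing K]

lemma det_one_updateCol (b : ι) (v : ι → K) : ((1 : Matrix ι ι K).updateCol b v).det = v b := by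
  rw [← Matrix.cramer_apply, Matrix.cramer_one, Module.End.one_apply]

lemma det_one_updateRow (a : ι) (u : ι → K) : ((1 : Matrix ι ι K).updateRow a u).det = u a := by
  rw [← Matrix.det_transpose, ← Matrix.updateCol_transpose, Matrix.transpose_one,
    det_one_updateCol]

lemma adjugate_updateRow_apply (M : Matrix ι ι K) (a b : ι) (u : ι → K) :
    (M.updateRow a u).adjugate b a = M.adjugate b a := by
  rw [Matrix.adjugate_apply, Matrix.adjugate_apply, Matrix.updateRow_idem]

lemma adjugate_updateCol_apply (M : Matrix ι ι K) (a b : ι) (v : ι → K) :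
    (M.updateCol b v).adjugate b a = M.adjugate b a := by
  rw [← Matrix.transpose_apply (Matrix.adjugate _), Matrix.adjugate_transpose,
    ← Matrix.updateRow_transpose, adjugate_updateRow_apply, ← Matrix.adjugate_transpose,
    Matrix.transpose_apply]

lemma det_add_single (M : Matrix ι ι K) (a b : ι) (s : K) :
    (M + Matrix.single a b s).det = M.det + s * M.adjugate b a := by
  have h : M + Matrix.single a b s = M.updateRow a (M a + s • Pi.single b 1) := by
    ext i j
    simp only [Matrix.add_apply, Matrix.single_apply, Matrix.updateRow_apply, Pi.add_apply,
      Pi.smul_apply, Pi.single_apply, smul_eq_mul]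
    grind
  rw [h, Matrix.det_updateRow_add, Matrix.det_updateRow_smul, Matrix.adjugate_apply,
    Matrix.updateRow_eq_self]

lemma det_one_updateRow_mul_mul_one_updateCol_add_single (M : Matrix ι ι K) (a b : ι)
    (u v : ι → K) (s : K) :
    ((1 : Matrix ι ι K).updateRow a u * M * (1 : Matrix ι ι K).updateCol b v +
      Matrix.single a b s).det = M.det * (u a * v b) + s * M.adjugate b a := by
  have hadj : ((1 : Matrix ι ι K).updateRow a u * M *
      (1 : Matrix ι ι K).updateCol b v).adjugate b a = M.adjugate b a := by
    rw [Matrix.updateRow_mul, Matrix.one_mul, Matrix.mul_updateCol, Matrix.mul_one,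
      adjugate_updateCol_apply, adjugate_updateRow_apply]
  rw [det_add_single, hadj, Matrix.det_mul, Matrix.det_mul, det_one_updateRow, det_one_updateCol]
  ring

theorem det_submatrix_update_update (M : Matrix ι ι K) {L : Matrix m ι K} {R : Matrix ι n K}
    {E : Matrix m n K} {r : ι → m} {c : ι → n} (hL : L.submatrix r id = 1)
    (hR : R.submatrix id c = 1) (hEr : ∀ i j, E (r i) j = 0) (hEc : ∀ i j, E i (c j) = 0)
    (a b : ι) (p : m) (q : n) :
    ((L * M * R + E).submatrix (Function.update r a p) (Function.update c b q)).det =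
      M.det * (L p a * R b q) + E p q * M.adjugate b a := by
  have hL' : L.submatrix (Function.update r a p) id = (1 : Matrix ι ι K).updateRow a (L p) := by
    rw [← hL]
    ext i j
    simp only [Matrix.submatrix_apply, Matrix.updateRow_apply, Function.update_apply, id]
    split_ifs <;> rfl
  have hR' : R.submatrix id (Function.update c b q) =
      (1 : Matrix ι ι K).updateCol b fun i ↦ R i q := by
    rw [← hR]
    ext i j
    simp only [Matrix.submatrix_apply, Matrix.updateCol_apply, Function.update_apply, id]
    split_ifs <;> rfl
  have hE' : E.submatrix (Function.update r a p) (Function.update c b q) =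
      Matrix.single a b (E p q) := by
    ext i j
    simp only [Matrix.submatrix_apply, Matrix.single_apply, Function.update_apply]
    grind
  rw [Matrix.submatrix_add, Pi.add_apply, Pi.add_apply,
    Matrix.submatrix_mul _ _ _ id _ Function.bijective_id,
    Matrix.submatrix_mul _ _ _ id _ Function.bijective_id, Matrix.submatrix_id_id, hL', hR', hE',
    det_one_updateRow_mul_mul_one_updateCol_add_single]

end Determinant

lemma DiffOne.exists_perm_comp_eq_update {ι α : Type*} [Fintype ι] [DecidableEq ι] [Nonempty ι]
    [DecidableEq α] {b r : ι → α} (h : DiffOne b r) (hb : Function.Injective b) :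
    ∃ (π : Equiv.Perm ι) (a : ι) (p : α), r ∘ π = Function.update b a p := by
  obtain ⟨hr, hcard⟩ := h
  obtain ⟨i₀, hi₀⟩ : ∃ i₀, ∀ i ≠ i₀, ∃ j, b j = r i := by
    by_contra! hne
    obtain ⟨i₁, -, h₁⟩ := hne (Classical.arbitrary ι)
    obtain ⟨i₂, h₂₁, h₂⟩ := hne i₁
    exact h₂₁ <| hr <| Finset.card_le_one.1 hcard _ (by simpa using h₂) _ (by simpa using h₁)
  obtain ⟨g, hg⟩ := Set.MapsTo.exists_equiv_extend_of_card_eq (t := Finset.univ.image b)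
    (by rw [Finset.card_image_of_injective _ hb, Finset.card_univ]) (s := {i₀}ᶜ) (f := r)
    (fun i hi ↦ by simpa using hi₀ i hi) hr.injOn
  have exists_eq : ∀ i, ∃ j, b j = g i := fun i ↦ by
    simpa only [Finset.mem_image, Finset.mem_univ, true_and] using (g i).2
  choose e he using exists_eq
  have he_inj : Function.Injective e := fun i j hij ↦
    g.injective <| Subtype.ext <| by rw [← he, ← he, hij]
  let π := Equiv.ofBijective e (Finite.injective_iff_bijective.1 he_inj)
  refine ⟨π.symm, π i₀, r i₀, funext fun j ↦ ?_⟩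
  obtain ⟨i, rfl⟩ := π.surjective j
  rcases eq_or_ne i i₀ with rfl | hi
  · simp
  · rw [Function.comp_apply, π.symm_apply_apply, Function.update_of_ne (π.injective.ne hi)]
    exact (hg i hi).symm.trans (he i).symm

lemma abs_det_submatrix_comp_perm {ι m n : Type*} [Fintype ι] [DecidableEq ι] (A : Matrix m n ℝ)
    (r : ι → m) (c : ι → n) (π ρ : Equiv.Perm ι) :
    |(A.submatrix (r ∘ π) (c ∘ ρ)).det| = |(A.submatrix r c).det| :=
  Matrix.abs_det_submatrix_equiv_equiv π ρ (A.submatrix r c)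

lemma abs_one_apply_le {ι : Type*} [DecidableEq ι] {ν : ℝ} (hν : 1 ≤ ν) (i j : ι) :
    |(1 : Matrix ι ι ℝ) i j| ≤ ν := by
  rw [Matrix.one_apply]
  split_ifs
  · rwa [abs_one]
  · rw [abs_zero]; positivity

section PartialLU

variable {ι m n : Type*} [Fintype ι] [DecidableEq ι]

lemma fromBlocks_eq_fromRows_mul_mul_fromCols {A₁₁ : Matrix ι ι ℝ} (A₁₂ : Matrix ι n ℝ)
    (A₂₁ : Matrix m ι ℝ) (hA₁₁ : IsUnit A₁₁.det) :
    Matrix.fromBlocks A₁₁ A₁₂ A₂₁ (A₂₁ * A₁₁⁻¹ * A₁₂) =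
      Matrix.fromRows 1 (A₂₁ * A₁₁⁻¹) * A₁₁ * Matrix.fromCols 1 (A₁₁⁻¹ * A₁₂) := by
  rw [Matrix.fromRows_mul, Matrix.fromRows_mul_fromCols, Matrix.one_mul,
    Matrix.nonsing_inv_mul_cancel_right _ _ hA₁₁, Matrix.mul_nonsing_inv_cancel_left _ _ hA₁₁,
    Matrix.mul_one, Matrix.mul_one, Matrix.mul_assoc]

theorem det_submatrix_update_inl_update_inl {A₁₁ : Matrix ι ι ℝ} (A₁₂ : Matrix ι n ℝ)
    (A₂₁ : Matrix m ι ℝ) (A₂₂ : Matrix m n ℝ) (hA₁₁ : IsUnit A₁₁.det) (a b : ι) (p : ι ⊕ m)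
    (q : ι ⊕ n) :
    ((Matrix.fromBlocks A₁₁ A₁₂ A₂₁ A₂₂).submatrix (Function.update Sum.inl a p)
      (Function.update Sum.inl b q)).det =
      (Matrix.fromRows 1 (A₂₁ * A₁₁⁻¹) p a * Matrix.fromCols 1 (A₁₁⁻¹ * A₁₂) b q +
        (Matrix.fromBlocks A₁₁ A₁₂ A₂₁ A₂₂ -
          Matrix.fromBlocks A₁₁ A₁₂ A₂₁ (A₂₁ * A₁₁⁻¹ * A₁₂)) p q * A₁₁⁻¹ b a) * A₁₁.det := by
  set E := Matrix.fromBlocks A₁₁ A₁₂ A₂₁ A₂₂ -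
    Matrix.fromBlocks A₁₁ A₁₂ A₂₁ (A₂₁ * A₁₁⁻¹ * A₁₂) with hE
  have hEr : ∀ i j, E (Sum.inl i) j = 0 := by rintro i (j | j) <;> simp [hE]
  have hEc : ∀ i j, E i (Sum.inl j) = 0 := by rintro (i | i) j <;> simp [hE]
  have hA : Matrix.fromBlocks A₁₁ A₁₂ A₂₁ A₂₂ =
      Matrix.fromRows 1 (A₂₁ * A₁₁⁻¹) * A₁₁ * Matrix.fromCols 1 (A₁₁⁻¹ * A₁₂) + E := by
    rw [← fromBlocks_eq_fromRows_mul_mul_fromCols A₁₂ A₂₁ hA₁₁, hE, add_sub_cancel]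
  have hadj : A₁₁.adjugate b a = A₁₁.det * A₁₁⁻¹ b a := by
    rw [Matrix.inv_def, Matrix.smul_apply, smul_eq_mul, Ring.inverse_eq_inv',
      mul_inv_cancel_left₀ hA₁₁.ne_zero]
  rw [hA, det_submatrix_update_update A₁₁ rfl rfl hEr hEc, hadj]
  ring

variable [Fintype m] [Fintype n] [DecidableEq n]

lemma sval_card_fromBlocks_mul_abs_inv_apply_le {A₁₁ : Matrix ι ι ℝ} {A₁₂ : Matrix ι n ℝ}
    {A₂₁ : Matrix m ι ℝ} (hA₁₁ : IsUnit A₁₁.det) {ν : ℝ} (hν : 0 ≤ ν)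
    (hX : ∀ i j, |(A₂₁ * A₁₁⁻¹) i j| ≤ ν) (hY : ∀ i j, |(A₁₁⁻¹ * A₁₂) i j| ≤ ν) (a b : ι) :
    sval (Matrix.fromBlocks A₁₁ A₁₂ A₂₁ (A₂₁ * A₁₁⁻¹ * A₁₂)) (Fintype.card ι) * |A₁₁⁻¹ b a| ≤
      (1 + √(Fintype.card ι * Fintype.card m) * ν) *
        (1 + √(Fintype.card ι * Fintype.card n) * ν) := by
  rw [fromBlocks_eq_fromRows_mul_mul_fromCols A₁₂ A₂₁ hA₁₁]
  set L := Matrix.fromRows (1 : Matrix ι ι ℝ) (A₂₁ * A₁₁⁻¹)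
  set R := Matrix.fromCols (1 : Matrix ι ι ℝ) (A₁₁⁻¹ * A₁₂)
  obtain ⟨i, hi⟩ := Nat.exists_eq_add_one.2 (Fintype.card_pos_iff.2 ⟨a⟩)
  have hL := specNorm_nonneg L
  have hR := specNorm_nonneg R
  calc sval (L * A₁₁ * R) (Fintype.card ι) * |A₁₁⁻¹ b a|
      ≤ specNorm L * sval A₁₁ (Fintype.card ι) * specNorm R * |A₁₁⁻¹ b a| := by
        gcongr
        rw [hi]
        exact sval_mul_mul_le L A₁₁ R i
    _ = specNorm L * specNorm R * (sval A₁₁ (Fintype.card ι) * |A₁₁⁻¹ b a|) := by ring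
    _ ≤ specNorm L * specNorm R :=
        mul_le_of_le_one_right (by positivity) (sval_card_mul_abs_inv_apply_le_one hA₁₁ a b)
    _ ≤ (1 + √(Fintype.card ι * Fintype.card m) * ν) *
          (1 + √(Fintype.card ι * Fintype.card n) * ν) := by
        gcongr
        exacts [specNorm_fromRows_one_le _ hν hX, specNorm_fromCols_one_le _ hν hY]

theorem statement_12_general [DecidableEq m] (A₁₁ : Matrix ι ι ℝ) (A₁₂ : Matrix ι n ℝ)
    (A₂₁ : Matrix m ι ℝ) (A₂₂ : Matrix m n ℝ) (hA₁₁ : IsUnit A₁₁.det) {μ ν : ℝ} (hμ : 0 < μ)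
    (hν : 1 ≤ ν)
    (hσ : 0 < Fintype.card ι →
      1 / μ * sval (Matrix.fromBlocks A₁₁ A₁₂ A₂₁ A₂₂) (Fintype.card ι) ≤
        sval (Matrix.fromBlocks A₁₁ A₁₂ A₂₁ (A₂₁ * A₁₁⁻¹ * A₁₂)) (Fintype.card ι))
    (hE : sval (Matrix.fromBlocks A₁₁ A₁₂ A₂₁ A₂₂ -
        Matrix.fromBlocks A₁₁ A₁₂ A₂₁ (A₂₁ * A₁₁⁻¹ * A₁₂)) 1 ≤
      μ * sval (Matrix.fromBlocks A₁₁ A₁₂ A₂₁ A₂₂) (Fintype.card ι + 1))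
    (hX : ∀ i j, |(A₂₁ * A₁₁⁻¹) i j| ≤ ν) (hY : ∀ i j, |(A₁₁⁻¹ * A₁₂) i j| ≤ ν)
    {r : ι → ι ⊕ m} {c : ι → ι ⊕ n} (hr : DiffOne Sum.inl r) (hc : DiffOne Sum.inl c) :
    vol ((Matrix.fromBlocks A₁₁ A₁₂ A₂₁ A₂₂).submatrix r c) ≤
      (ν ^ 2 + μ ^ 2 * (1 + √(Fintype.card ι * Fintype.card m) * ν) *
        (1 + √(Fintype.card ι * Fintype.card n) * ν)) * vol A₁₁ := by
  rw [vol_eq_abs_det, vol_eq_abs_det]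
  rcases isEmpty_or_nonempty ι with _ | _
  · simp only [Matrix.det_isEmpty, abs_one, mul_one]
    exact le_add_of_le_of_nonneg (one_le_pow₀ hν) (by positivity)
  obtain ⟨π, a, p, hp⟩ := hr.exists_perm_comp_eq_update Sum.inl_injective
  obtain ⟨ρ, b, q, hq⟩ := hc.exists_perm_comp_eq_update Sum.inl_injective
  rw [← abs_det_submatrix_comp_perm _ r c π ρ, hp, hq,
    det_submatrix_update_inl_update_inl A₁₂ A₂₁ A₂₂ hA₁₁, abs_mul, mul_assoc (μ ^ 2)]
  have hL : |Matrix.fromRows 1 (A₂₁ * A₁₁⁻¹) p a| ≤ ν :=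
    p.rec (fun i ↦ abs_one_apply_le hν i a) fun i ↦ hX i a
  have hR : |Matrix.fromCols 1 (A₁₁⁻¹ * A₁₂) b q| ≤ ν :=
    q.rec (fun j ↦ abs_one_apply_le hν b j) fun j ↦ hY b j
  have hEpq := abs_apply_le_sq_mul_sval Fintype.card_pos hμ (hσ Fintype.card_pos) hE p q
  have hinv := sval_card_fromBlocks_mul_abs_inv_apply_le hA₁₁ (by positivity) hX hY a b
  refine mul_le_mul_of_nonneg_right ((abs_add_le _ _).trans (add_le_add ?_ ?_)) (abs_nonneg _)
  · rw [abs_mul, sq]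
    exact mul_le_mul hL hR (abs_nonneg _) (by positivity)
  · rw [abs_mul]
    refine (mul_le_mul_of_nonneg_right hEpq (abs_nonneg _)).trans ?_
    rw [mul_assoc]
    exact mul_le_mul_of_nonneg_left hinv (by positivity)

end PartialLU

theorem statement_12 {k m' n' : ℕ} (hm : 1 ≤ m') (hn : 1 ≤ n')
    (A11 : Matrix (Fin k) (Fin k) ℝ) (A12 : Matrix (Fin k) (Fin n') ℝ)
    (A21 : Matrix (Fin m') (Fin k) ℝ) (A22 : Matrix (Fin m') (Fin n') ℝ)
    (hinv : IsUnit A11.det)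
    (μ ν : ℝ) (hμ : 1 ≤ μ) (hν : 1 ≤ ν)
    (h1 : ∀ j : ℕ, 1 ≤ j → j ≤ k →
      (1 / μ) * sval (Matrix.fromBlocks A11 A12 A21 A22) j ≤
        sval (Matrix.fromBlocks A11 A12 A21 (A21 * A11⁻¹ * A12)) j ∧
      sval (Matrix.fromBlocks A11 A12 A21 (A21 * A11⁻¹ * A12)) j ≤
        μ * sval (Matrix.fromBlocks A11 A12 A21 A22) j)
    (h2 : ∀ j : ℕ, 1 ≤ j → j ≤ min (k + m') (k + n') - k →
      sval (Matrix.fromBlocks A11 A12 A21 A22) (k + j) ≤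
        sval (Matrix.fromBlocks A11 A12 A21 A22
              - Matrix.fromBlocks A11 A12 A21 (A21 * A11⁻¹ * A12)) j ∧
      sval (Matrix.fromBlocks A11 A12 A21 A22
              - Matrix.fromBlocks A11 A12 A21 (A21 * A11⁻¹ * A12)) j ≤
        μ * sval (Matrix.fromBlocks A11 A12 A21 A22) (k + j))
    (h3a : ∀ i j, |(A21 * A11⁻¹) i j| ≤ ν)
    (h3b : ∀ i j, |(A11⁻¹ * A12) i j| ≤ ν) :
    ∀ (r : Fin k → Fin k ⊕ Fin m') (c : Fin k → Fin k ⊕ Fin n'),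
      DiffOne Sum.inl r → DiffOne Sum.inl c →
      vol ((Matrix.fromBlocks A11 A12 A21 A22).submatrix r c) ≤
        (ν ^ 2 + μ ^ 2 * (1 + Real.sqrt (k * m') * ν) * (1 + Real.sqrt (k * n') * ν)) *
          vol A11 := by
  intro r c hr hc
  simpa only [Fintype.card_fin] using statement_12_general A11 A12 A21 A22 hinv (by positivity) hν
    (by simpa only [Fintype.card_fin] using fun hk : 0 < k ↦ (h1 k hk le_rfl).1)
    (by simpa only [Fintype.card_fin] using (h2 1 le_rfl (by lia)).2) h3a h3b hr hc
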